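/- arXiv:2002.00550 — 2 statements merged into one kernel-verified Lean document; each statement's English description precedes it below -/
import Mathlib

section
/- For every integer N, every positive natural number m, and every complex number w, the following identity holds: ∑_{k=0}^{m} C(m,k) · B_{m+k+1}((N−w)/2)/(m+k+1) · w^{m−k} = ((−1)^{m+1}/2^{2m+1}) · [ (2w)^{2m+1}/(2(2m+1)·C(2m,m)) − sign(N−1) · ∑_{k=1}^{|N−1|} ( w² − (|N−1|−2k+1)² )^m ], where sign(N−1) is 1 if N>1, −1 if N<1, and 0 if N=1 (in which case the second sum is empty). -/
open Finset

/-- The `n`-th Bernoulli polynomial evaluated at a complex number `x`. -/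
noncomputable def bernoulliPolyC (n : ℕ) (x : ℂ) : ℂ :=
  ((Polynomial.bernoulli n).map (algebraMap ℚ ℂ)).eval x

open Polynomial in
theorem bernoulliPolyC_eq_aeval (n : ℕ) (x : ℂ) :
    bernoulliPolyC n x = aeval x (Polynomial.bernoulli n) := by
  rw [bernoulliPolyC, eval_map_algebraMap]

@[simp]
theorem bernoulliPolyC_zero (x : ℂ) : bernoulliPolyC 0 x = 1 := by
  simp [bernoulliPolyC]

theorem bernoulliPolyC_add_one (n : ℕ) (x : ℂ) :
    bernoulliPolyC n (x + 1) = bernoulliPolyC n x + n * x ^ (n - 1) := by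
  have h := congrArg (Polynomial.aeval x) (Polynomial.bernoulli_comp_one_add_X n)
  simpa [bernoulliPolyC_eq_aeval, Polynomial.aeval_comp, add_comm] using h

theorem bernoulliPolyC_one_sub (n : ℕ) (x : ℂ) :
    bernoulliPolyC n (1 - x) = (-1) ^ n * bernoulliPolyC n x := by
  have h := congrArg (Polynomial.aeval x) (Polynomial.bernoulli_comp_one_sub_X n)
  simpa [bernoulliPolyC_eq_aeval, Polynomial.aeval_comp] using h

open PowerSeries in
/-- The addition theorem for Bernoulli polynomials. -/
theorem bernoulliPolyC_add (n : ℕ) (x y : ℂ) :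
    bernoulliPolyC n (x + y) =
      ∑ j ∈ range (n + 1), (n.choose j : ℂ) * bernoulliPolyC j x * y ^ (n - j) := by
  have hexp : exp ℂ - 1 ≠ 0 := by
    intro h
    simpa using congrArg (coeff 1) h
  have hmul : (PowerSeries.mk fun n => Polynomial.aeval (x + y)
        ((1 / n.factorial : ℚ) • Polynomial.bernoulli n)) =
      (PowerSeries.mk fun n => Polynomial.aeval x
        ((1 / n.factorial : ℚ) • Polynomial.bernoulli n)) * rescale y (exp ℂ) := by
    apply mul_right_cancel₀ hexp
    rw [Polynomial.bernoulli_generating_function, mul_right_comm,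
      Polynomial.bernoulli_generating_function, mul_assoc, exp_mul_exp_eq_exp_add]
  have hn := congrArg (coeff n) hmul
  rw [PowerSeries.coeff_mul, Nat.sum_antidiagonal_eq_sum_range_succ_mk] at hn
  simp only [coeff_mk, coeff_rescale, coeff_exp, map_smul, ← bernoulliPolyC_eq_aeval] at hn
  simp only [Algebra.smul_def] at hn
  have hfac (k : ℕ) : (k.factorial : ℂ) ≠ 0 := mod_cast k.factorial_ne_zero
  have hn' := congrArg ((n.factorial : ℂ) * ·) hn
  simp only [map_div₀, map_one, map_natCast, Finset.mul_sum] at hn'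
  rw [← mul_assoc, mul_one_div_cancel (hfac n), one_mul] at hn'
  rw [hn']
  refine Finset.sum_congr rfl fun j hj => ?_
  rw [Nat.cast_choose ℂ (Finset.mem_range_succ_iff.mp hj)]
  have := hfac j
  have := hfac (n - j)
  field_simp

open Polynomial

/-- The linear functional sending `X ^ p` to `B_{p+1}(x) / (p + 1)`. -/
noncomputable def bernoulliSum (x : ℂ) : ℂ[X] →ₗ[ℂ] ℂ :=
  lsum fun p => LinearMap.mulRight ℂ (bernoulliPolyC (p + 1) x / (p + 1))

/-- The linear functional integrating a polynomial from `0` to `w`. -/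
noncomputable def polyIntegral (w : ℂ) : ℂ[X] →ₗ[ℂ] ℂ :=
  lsum fun p => LinearMap.mulRight ℂ (w ^ (p + 1) / (p + 1))

@[simp]
theorem bernoulliSum_monomial (x a : ℂ) (p : ℕ) :
    bernoulliSum x (monomial p a) = a * (bernoulliPolyC (p + 1) x / (p + 1)) := by
  simp [bernoulliSum, lsum_apply, sum_monomial_index]

@[simp]
theorem polyIntegral_monomial (w a : ℂ) (p : ℕ) :
    polyIntegral w (monomial p a) = a * (w ^ (p + 1) / (p + 1)) := by
  simp [polyIntegral, lsum_apply, sum_monomial_index]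

theorem bernoulliSum_add_one (x : ℂ) (P : ℂ[X]) :
    bernoulliSum (x + 1) P = bernoulliSum x P + P.eval x := by
  induction P using Polynomial.induction_on' with
  | add P Q hP hQ => simp only [map_add, eval_add, hP, hQ]; ring
  | monomial p a =>
    have : (p + 1 : ℂ) ≠ 0 := by exact_mod_cast p.succ_ne_zero
    simp only [bernoulliSum_monomial, eval_monomial, bernoulliPolyC_add_one]
    push_cast
    field_simp

theorem bernoulliSum_add_natCast (x : ℂ) (P : ℂ[X]) (M : ℕ) :
    bernoulliSum (x + M) P = bernoulliSum x P + ∑ i ∈ range M, P.eval (x + i) := by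
  induction M with
  | zero => simp
  | succ M ih =>
    rw [Nat.cast_succ, ← add_assoc, bernoulliSum_add_one, ih, Finset.sum_range_succ, add_assoc]

theorem bernoulliSum_one_sub (x : ℂ) (P : ℂ[X]) :
    bernoulliSum (1 - x) P = -bernoulliSum x (P.comp (-X)) := by
  induction P using Polynomial.induction_on' with
  | add P Q hP hQ => simp only [map_add, add_comp, hP, hQ]; ring
  | monomial p a =>
    have h : (monomial p a).comp (-X : ℂ[X]) = monomial p (a * (-1) ^ p) := by
      rw [monomial_comp, neg_pow, ← C_mul_X_pow_eq_monomial]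
      simp [mul_assoc]
    rw [h, bernoulliSum_monomial, bernoulliSum_monomial, bernoulliPolyC_one_sub]
    ring

theorem bernoulliSum_add (x w : ℂ) (P : ℂ[X]) :
    bernoulliSum (x + w) P = bernoulliSum x (P.comp (X + C w)) + polyIntegral w P := by
  induction P using Polynomial.induction_on' with
  | add P Q hP hQ => simp only [map_add, add_comp, hP, hQ]; ring
  | monomial p a =>
    have hp : (p + 1 : ℂ) ≠ 0 := by exact_mod_cast p.succ_ne_zero
    have h : (monomial p a).comp (X + C w) =
        ∑ j ∈ range (p + 1), monomial j (a * w ^ (p - j) * p.choose j) := by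
      rw [monomial_comp, add_pow, Finset.mul_sum]
      refine Finset.sum_congr rfl fun j _ => ?_
      rw [← C_mul_X_pow_eq_monomial]
      simp only [map_mul, map_pow, map_natCast]
      ring
    rw [h, map_sum, bernoulliSum_monomial, polyIntegral_monomial, bernoulliPolyC_add,
      Finset.sum_range_succ']
    simp only [bernoulliSum_monomial, add_div, mul_add, Finset.sum_div, Finset.mul_sum]
    congr 1
    · refine Finset.sum_congr rfl fun j _ => ?_
      have hj : (j + 1 : ℂ) ≠ 0 := by exact_mod_cast j.succ_ne_zero
      have hc : (p + 1 : ℂ) * p.choose j = (p + 1).choose (j + 1) * (j + 1) := by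
        exact_mod_cast Nat.add_one_mul_choose_eq p j
      rw [Nat.add_sub_add_right]
      field_simp
      linear_combination (-a * bernoulliPolyC (j + 1) x * w ^ (p - j)) * hc
    · simp

theorem polyIntegral_derivative (w : ℂ) (P : ℂ[X]) :
    polyIntegral w (derivative P) = P.eval w - P.eval 0 := by
  induction P using Polynomial.induction_on' with
  | add P Q hP hQ => simp only [map_add, eval_add, hP, hQ]; ring
  | monomial p a =>
    cases p with
    | zero => simp
    | succ p =>
      have hp : (p + 1 : ℂ) ≠ 0 := by exact_mod_cast p.succ_ne_zero
      simp only [derivative_monomial_succ, polyIntegral_monomial, eval_monomial]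
      rw [zero_pow p.succ_ne_zero]
      field_simp
      simp

/-- A polynomial form of the beta integral at positive integers. -/
theorem polyIntegral_X_pow_mul (w : ℂ) (a b : ℕ) :
    (a + b + 1).factorial * polyIntegral w (X ^ a * (X - C w) ^ b) =
      (-1) ^ b * w ^ (a + b + 1) * a.factorial * b.factorial := by
  induction b generalizing a with
  | zero =>
    have ha : (a + 1 : ℂ) ≠ 0 := by exact_mod_cast a.succ_ne_zero
    rw [pow_zero, mul_one, X_pow_eq_monomial, polyIntegral_monomial, add_zero,
      Nat.factorial_succ]
    push_cast
    field_simp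
    simp
  | succ b ih =>
    have hparts := polyIntegral_derivative w (X ^ (a + 1) * (X - C w) ^ (b + 1))
    have hder : derivative (X ^ (a + 1) * (X - C w) ^ (b + 1)) =
        (a + 1 : ℂ) • (X ^ a * (X - C w) ^ (b + 1)) +
          (b + 1 : ℂ) • (X ^ (a + 1) * (X - C w) ^ b) := by
      simp only [derivative_mul, derivative_X_pow_succ, derivative_X_sub_C_pow, smul_eq_C_mul,
        map_add, map_natCast, map_one]
      push_cast
      ring
    rw [hder] at hparts
    simp only [map_add, map_smul, smul_eq_mul, eval_mul, eval_pow, eval_sub, eval_X, eval_C,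
      sub_self, zero_pow (Nat.succ_ne_zero _), mul_zero, zero_mul] at hparts
    have ih' := ih (a + 1)
    rw [show a + 1 + b + 1 = a + (b + 1) + 1 by ring, Nat.factorial_succ a] at ih'
    have ha : (a + 1 : ℂ) ≠ 0 := by exact_mod_cast a.succ_ne_zero
    apply mul_left_cancel₀ ha
    rw [Nat.factorial_succ b]
    push_cast at ih' ⊢
    linear_combination ((a + (b + 1) + 1).factorial : ℂ) * hparts - (b + 1) * ih'

theorem polyIntegral_central (w : ℂ) (m : ℕ) :
    polyIntegral w (X ^ m * (X - C w) ^ m) =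
      (-1) ^ m * w ^ (2 * m + 1) / ((2 * m + 1) * (2 * m).choose m) := by
  have h := polyIntegral_X_pow_mul w m m
  have hc : ((2 * m).choose m : ℂ) * m.factorial * m.factorial = (2 * m).factorial := by
    have := Nat.choose_mul_factorial_mul_factorial (show m ≤ 2 * m by lia)
    rw [show 2 * m - m = m by lia] at this
    exact_mod_cast this
  have hm : (2 * m + 1 : ℂ) ≠ 0 := by exact_mod_cast (2 * m).succ_ne_zero
  have hch : ((2 * m).choose m : ℂ) ≠ 0 := by
    exact_mod_cast (Nat.choose_pos (show m ≤ 2 * m by lia)).ne'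
  have hf : (m.factorial : ℂ) ≠ 0 := by exact_mod_cast m.factorial_ne_zero
  rw [← two_mul, Nat.factorial_succ] at h
  push_cast at h
  rw [← hc] at h
  rw [eq_div_iff (mul_ne_zero hm hch)]
  apply mul_right_cancel₀ (mul_ne_zero hf hf)
  linear_combination h

theorem bernoulliSum_X_pow_mul_X_add_C_pow (x w : ℂ) (m : ℕ) :
    bernoulliSum x (X ^ m * (X + C w) ^ m) =
      ∑ k ∈ range (m + 1),
        (m.choose k : ℂ) * (bernoulliPolyC (m + k + 1) x / (m + k + 1)) * w ^ (m - k) := by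
  have h : (X ^ m * (X + C w) ^ m : ℂ[X]) =
      ∑ k ∈ range (m + 1), monomial (m + k) (m.choose k * w ^ (m - k)) := by
    rw [add_pow, Finset.mul_sum]
    refine Finset.sum_congr rfl fun j _ => ?_
    rw [← C_mul_X_pow_eq_monomial]
    simp only [map_mul, map_pow, map_natCast]
    ring
  rw [h, map_sum]
  refine Finset.sum_congr rfl fun k _ => ?_
  rw [bernoulliSum_monomial]
  push_cast
  ring

/-- The reflected sum, with both evaluation points differing by the integer `N - 1`. -/
theorem bernoulliSum_one_sub_eq (N : ℤ) (m : ℕ) (w : ℂ) :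
    bernoulliSum (((N : ℂ) - w) / 2 + w) (X ^ m * (X - C w) ^ m) =
      bernoulliSum (1 - ((N : ℂ) - w) / 2) (X ^ m * (X - C w) ^ m) +
        (-1) ^ m / 4 ^ m * (((N - 1).sign : ℂ) * ∑ k ∈ Icc 1 (N - 1).natAbs,
          (w ^ 2 - (((N - 1).natAbs : ℂ) - 2 * (k : ℂ) + 1) ^ 2) ^ m) := by
  have hsum (M : ℕ) : ∑ i ∈ range M, (X ^ m * (X - C w) ^ m).eval ((1 - M + w) / 2 + i) =
      (-1) ^ m / 4 ^ m * ∑ k ∈ Icc 1 M, (w ^ 2 - ((M : ℂ) - 2 * (k : ℂ) + 1) ^ 2) ^ m := by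
    rw [← Finset.Ico_add_one_right_eq_Icc, Finset.sum_Ico_eq_sum_range, Nat.add_sub_cancel,
      Finset.mul_sum]
    refine Finset.sum_congr rfl fun i _ => ?_
    simp only [eval_mul, eval_pow, eval_sub, eval_X, eval_C]
    rw [← div_pow, ← mul_pow, ← mul_pow]
    push_cast
    ring
  rcases le_total 1 N with h | h
  · obtain ⟨M, hM⟩ := Int.eq_ofNat_of_zero_le (sub_nonneg.mpr h)
    have hN : (N : ℂ) = M + 1 := by exact_mod_cast eq_add_of_sub_eq hM
    have hx : ((N : ℂ) - w) / 2 + w = (1 - ((N : ℂ) - w) / 2) + M := by rw [hN]; ring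
    have hx' : 1 - ((N : ℂ) - w) / 2 = (1 - M + w) / 2 := by rw [hN]; ring
    rw [hx, bernoulliSum_add_natCast, hx', hsum, hM]
    rcases M.eq_zero_or_pos with rfl | hpos
    · simp
    · simp [Int.sign_eq_one_of_pos (Int.natCast_pos.mpr hpos)]
  · obtain ⟨M, hM⟩ := Int.eq_ofNat_of_zero_le (sub_nonneg.mpr h)
    have hM' : N - 1 = -(M : ℤ) := by lia
    have hN : (N : ℂ) = 1 - M := by
      have : N = 1 - (M : ℤ) := by lia
      exact_mod_cast congrArg (Int.cast : ℤ → ℂ) this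
    have hx : 1 - ((N : ℂ) - w) / 2 = (((N : ℂ) - w) / 2 + w) + M := by rw [hN]; ring
    have hx' : ((N : ℂ) - w) / 2 + w = (1 - M + w) / 2 := by rw [hN]; ring
    rw [hx, bernoulliSum_add_natCast, hx', hsum, hM']
    rcases M.eq_zero_or_pos with rfl | hpos
    · simp
    · simp [Int.sign_eq_one_of_pos (Int.natCast_pos.mpr hpos)]

theorem stmt_0 (N : ℤ) (m : ℕ) (hm : 0 < m) (w : ℂ) :
    ∑ k ∈ Finset.range (m + 1),
        (m.choose k : ℂ) * (bernoulliPolyC (m + k + 1) (((N : ℂ) - w) / 2) / (m + k + 1))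
          * w ^ (m - k)
      = (-1) ^ (m + 1) / 2 ^ (2 * m + 1) *
          ((2 * w) ^ (2 * m + 1) / (2 * (2 * m + 1) * ((2 * m).choose m)) -
            ((N - 1).sign : ℂ) *
              ∑ k ∈ Finset.Icc 1 (N - 1).natAbs,
                (w ^ 2 - (((N - 1).natAbs : ℂ) - 2 * (k : ℂ) + 1) ^ 2) ^ m) := by
  rw [← bernoulliSum_X_pow_mul_X_add_C_pow]
  have hrefl := bernoulliSum_one_sub_eq N m w
  have hcomp : ((X ^ m * (X - C w) ^ m : ℂ[X]).comp (X + C w)) = X ^ m * (X + C w) ^ m := by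
    simp [mul_comm]
  have hneg : ((X ^ m * (X - C w) ^ m : ℂ[X]).comp (-X)) = X ^ m * (X + C w) ^ m := by
    simp only [mul_comp, pow_comp, sub_comp, X_comp, C_comp]
    rw [← mul_pow, ← mul_pow]
    ring
  rw [bernoulliSum_add, bernoulliSum_one_sub, hcomp, hneg, polyIntegral_central] at hrefl
  have h4 : (2 : ℂ) ^ (2 * m + 1) = 2 * 4 ^ m := by
    rw [pow_succ, pow_mul]
    norm_num [mul_comm]
  have h4' : (4 : ℂ) ^ m ≠ 0 := pow_ne_zero m (by norm_num)
  have hodd : (2 * m + 1 : ℂ) ≠ 0 := by exact_mod_cast (2 * m).succ_ne_zero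
  have hch : ((2 * m).choose m : ℂ) ≠ 0 := by
    exact_mod_cast (Nat.choose_pos (show m ≤ 2 * m by lia)).ne'
  rw [mul_pow, h4]
  generalize ((N - 1).sign : ℂ) * ∑ k ∈ Finset.Icc 1 (N - 1).natAbs,
    (w ^ 2 - (((N - 1).natAbs : ℂ) - 2 * (k : ℂ) + 1) ^ 2) ^ m = S at hrefl ⊢
  field_simp at hrefl ⊢
  linear_combination hrefl
end

section
/- For every positive natural number m, (−1)^{m+1} · ∑_{k=0}^{m} C(m,k) · (B_{m+k+1}/(m+k+1)) · 2^k = 1/( 2^{m+2}·(2m+1)·C(2m,m) ) + (1/2^{3m+2}) · ∑_{k=0}^{m} (−1)^k · C(m,k) · E_{2k}, where E_n denotes the n-th Euler number. -/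
open Finset

/-- The `n`-th Euler (secant) number, defined as the `n`-th Taylor coefficient (times `n!`)
of the exponential generating function `2 / (e^z + e^(-z))`, i.e. the `n`-th derivative
of that function at `0`. -/
noncomputable def eulerNumber (n : ℕ) : ℂ :=
  iteratedDeriv n (fun z : ℂ => 2 / (Complex.exp z + Complex.exp (-z))) 0

open PowerSeries in
theorem eulerPowerSeries_mul :
    (PowerSeries.mk fun n => eulerNumber n / n.factorial) *
      (exp ℂ + rescale (-1 : ℂ) (exp ℂ)) = 2 := by
  have hcont : ContDiffAt ℂ ⊤ (fun z : ℂ => 2 / (Complex.exp z + Complex.exp (-z))) 0 := by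
    refine ContDiffAt.div (by fun_prop) (by fun_prop) (by simp)
  have hprod : (fun z : ℂ => (2 / (Complex.exp z + Complex.exp (-z))) *
      (Complex.exp z + Complex.exp (-z))) =ᶠ[nhds 0] fun _ => 2 := by
    have : ∀ᶠ z : ℂ in nhds 0, Complex.exp z + Complex.exp (-z) ≠ 0 :=
      ContinuousAt.eventually_ne (by fun_prop) (by simp)
    filter_upwards [this] with z hz
    field_simp
  have hcosh (k : ℕ) : iteratedDeriv k (fun z : ℂ => Complex.exp z + Complex.exp (-z)) 0
      = 1 + (-1) ^ k := by
    have h1 := congrFun (iteratedDeriv_cexp_const_mul k 1) 0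
    have h2 := congrFun (iteratedDeriv_cexp_const_mul k (-1)) 0
    simp only [one_mul, neg_one_mul] at h1 h2
    rw [iteratedDeriv_fun_add (by fun_prop) (by fun_prop), h1, h2]
    simp
  ext n
  have h := hprod.iteratedDeriv_eq n
  rw [iteratedDeriv_fun_mul (hcont.of_le le_top) (by fun_prop), iteratedDeriv_const] at h
  have h2 : coeff n (2 : PowerSeries ℂ) = if n = 0 then 2 else 0 := by
    rw [show (2 : PowerSeries ℂ) = C 2 from (map_ofNat _ 2).symm, coeff_C]
  have hn : (n.factorial : ℂ) ≠ 0 := by exact_mod_cast n.factorial_ne_zero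
  have hs : (if n = 0 then (2:ℂ) else 0) = (if n = 0 then (2:ℂ) else 0) / n.factorial := by
    split_ifs with h0 <;> simp [h0]
  rw [h2, hs, ← h, PowerSeries.coeff_mul, Finset.Nat.sum_antidiagonal_eq_sum_range_succ_mk,
    Finset.sum_div]
  refine Finset.sum_congr rfl fun k hk => ?_
  have hk' : k ≤ n := by simpa [Nat.lt_succ_iff] using hk
  rw [hcosh, Nat.cast_choose ℂ hk']
  simp [coeff_rescale, coeff_exp, eulerNumber]
  field_simp

open PowerSeries in
theorem aeval_bernoulli_quarter_even {n : ℕ} (hn : Even n) :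
    4 ^ (n + 1) * Polynomial.aeval (1 / 4 : ℂ) (Polynomial.bernoulli (n + 1))
      = -(n + 1) * eulerNumber n := by
  set F := PowerSeries.mk fun n => eulerNumber n / (n.factorial : ℂ) with hF
  set G := PowerSeries.mk fun n =>
    Polynomial.aeval (1 / 4 : ℂ) ((1 / (n.factorial : ℚ)) • Polynomial.bernoulli n) with hG
  set a := exp ℂ with ha
  have hab : a * rescale (-1 : ℂ) a = 1 := exp_mul_exp_neg_eq_one
  set b := rescale (-1 : ℂ) a with hb
  have hE : F * (a + b) = 2 := eulerPowerSeries_mul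
  have hB : G * (a - 1) = X * rescale (1 / 4 : ℂ) a := Polynomial.bernoulli_generating_function _
  have ha4 : rescale (4 : ℂ) a = a ^ 4 := by simpa using (exp_pow_eq_rescale_exp (A := ℂ) 4).symm
  have h1 : rescale (4 : ℂ) G * (a ^ 4 - 1) = C 4 * X * a := by
    simpa [ha4, rescale_rescale, rescale_X] using congrArg (rescale (4 : ℂ)) hB
  have h2 : rescale (-1 : ℂ) (rescale (4 : ℂ) G) * (b ^ 4 - 1) = C 4 * -X * b := by
    have hC : rescale (-1 : ℂ) (C 4) = C 4 := by
      rw [show (C 4 : PowerSeries ℂ) = 4 from map_ofNat _ 4, map_ofNat]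
    simpa [← hb, rescale_X, hC] using congrArg (rescale (-1 : ℂ)) h1
  have hne : a ^ 4 - 1 ≠ 0 := fun h0 => by
    have := congrArg (coeff 1) h0
    rw [← ha4, map_sub, coeff_rescale, ha, coeff_exp, coeff_one] at this
    simp at this
  have hodd : rescale (4 : ℂ) G - rescale (-1 : ℂ) (rescale (4 : ℂ) G) = - (C 2 * X * F) := by
    refine mul_right_cancel₀ hne ?_
    have hab4 : a ^ 4 * b ^ 4 = 1 := by rw [← mul_pow, hab, one_pow]
    have hC4 : (C 4 : PowerSeries ℂ) = 4 := map_ofNat _ 4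
    have hC2 : (C 2 : PowerSeries ℂ) = 2 := map_ofNat _ 2
    rw [hC4] at h1 h2
    rw [hC2]
    linear_combination h1 + a ^ 4 * h2 - rescale (-1 : ℂ) (rescale (4 : ℂ) G) * hab4
      - 4 * X * a ^ 3 * hab + 2 * X * (a ^ 2 - 1) * (a * hE - F * hab)
  have hcoeff := congrArg (coeff (n + 1)) hodd
  have hfac : (n.factorial : ℂ) ≠ 0 := by exact_mod_cast n.factorial_ne_zero
  have hn1 : (n + 1 : ℂ) ≠ 0 := by exact_mod_cast n.succ_ne_zero
  rw [mul_assoc] at hcoeff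
  simp only [map_sub, map_neg, coeff_rescale, coeff_C_mul, coeff_succ_X_mul, hF, hG, coeff_mk,
    map_smul, hn.add_one.neg_one_pow, Nat.factorial_succ] at hcoeff
  simp only [Rat.smul_def] at hcoeff
  push_cast at hcoeff
  field_simp at hcoeff
  linear_combination hcoeff / 2

theorem sum_neg_one_pow_choose_succ {R : Type*} [CommRing R] (f : ℕ → R) (m : ℕ) :
    ∑ k ∈ range (m + 2), (-1) ^ k * ((m + 1).choose k : R) * f k =
      ∑ k ∈ range (m + 1), (-1) ^ k * (m.choose k : R) * (f k - f (k + 1)) := by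
  have := sum_choose_succ_mul (fun k _ => (-1) ^ k * f k) m
  simp only [mul_sub, Finset.sum_sub_distrib]
  convert this using 1
  · exact Finset.sum_congr rfl fun k _ => by ring
  · rw [sub_eq_add_neg, ← Finset.sum_neg_distrib]
    congr 1 <;> exact Finset.sum_congr rfl fun k _ => by ring

theorem sum_neg_one_pow_choose_div (m : ℕ) (x : ℂ) (hx : ∀ k : ℕ, x + k ≠ 0) :
    ∑ k ∈ range (m + 1), (-1) ^ k * (m.choose k : ℂ) * (1 / (x + k)) =
      m.factorial / ∏ k ∈ range (m + 1), (x + k) := by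
  induction m generalizing x with
  | zero => simp
  | succ m ih =>
    have hx' : ∀ k : ℕ, x + 1 + k ≠ 0 := fun k => by
      have := hx (k + 1); push_cast at this; rwa [add_right_comm, add_assoc]
    rw [sum_neg_one_pow_choose_succ]
    simp only [mul_sub, Finset.sum_sub_distrib]
    have h2 := ih (x + 1) hx'
    simp only [add_right_comm x 1, add_assoc x] at h2
    push_cast
    rw [ih x hx, h2, Finset.prod_range_succ _ (m + 1), Nat.factorial_succ]
    have hsplit : (∏ k ∈ range (m + 1), (x + k)) * (x + (m + 1 : ℕ)) =
        (∏ k ∈ range (m + 1), (x + (k + 1 : ℕ))) * x := by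
      rw [← Finset.prod_range_succ (fun k : ℕ => x + k), Finset.prod_range_succ']
      simp
    have hP : ∏ k ∈ range (m + 1), (x + k) ≠ 0 := Finset.prod_ne_zero_iff.mpr fun k _ => hx k
    have hQ : ∏ k ∈ range (m + 1), (x + (k + 1 : ℕ)) ≠ 0 :=
      Finset.prod_ne_zero_iff.mpr fun k _ => hx (k + 1)
    have hm := hx (m + 1)
    push_cast at hsplit hQ hm ⊢
    field_simp
    linear_combination (-m.factorial : ℂ) * hsplit

theorem two_mul_add_one_mul_choose_mul_factorial (m : ℕ) :
    (2 * m + 1) * ((2 * m).choose m : ℂ) * m.factorial =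
      2 * 4 ^ m * ∏ k ∈ range (m + 1), ((1 / 2 : ℂ) + k) := by
  induction m with
  | zero => simp
  | succ m ih =>
    have h : ((m : ℂ) + 1) * ((2 * (m + 1)).choose (m + 1)) =
        2 * (2 * m + 1) * ((2 * m).choose m) := by
      exact_mod_cast Nat.succ_mul_centralBinom_succ m
    rw [Finset.prod_range_succ, Nat.factorial_succ, pow_succ]
    push_cast
    linear_combination (2 * m + 3) * m.factorial * h + (4 * m + 6) * ih

theorem sum_neg_one_pow_choose_div_odd (m : ℕ) :
    ∑ k ∈ range (m + 1), (-1) ^ k * (m.choose k : ℂ) * (1 / (2 * k + 1)) =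
      4 ^ m / ((2 * m + 1) * ((2 * m).choose m)) := by
  have hx : ∀ k : ℕ, (1 / 2 : ℂ) + k ≠ 0 := fun k => by
    have : ((2 * k + 1 : ℕ) : ℂ) ≠ 0 := Nat.cast_ne_zero.mpr (by omega)
    push_cast at this
    contrapose! this
    linear_combination 2 * this
  have hP : ∏ k ∈ range (m + 1), ((1 / 2 : ℂ) + k) ≠ 0 :=
    Finset.prod_ne_zero_iff.mpr fun k _ => hx k
  have hm : (2 * m + 1 : ℂ) ≠ 0 := by exact_mod_cast (2 * m).succ_ne_zero
  have hc : ((2 * m).choose m : ℂ) ≠ 0 := by exact_mod_cast (Nat.centralBinom_pos m).ne'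
  have h := sum_neg_one_pow_choose_div m (1 / 2) hx
  have hterm : ∑ k ∈ range (m + 1), (-1) ^ k * (m.choose k : ℂ) * (1 / (2 * k + 1)) =
      1 / 2 * ∑ k ∈ range (m + 1), (-1) ^ k * (m.choose k : ℂ) * (1 / (1 / 2 + k)) := by
    rw [Finset.mul_sum]
    refine Finset.sum_congr rfl fun k _ => ?_
    rw [show (2 * k + 1 : ℂ) = 2 * (1 / 2 + k) by ring, one_div, mul_inv]
    ring
  rw [hterm, h, eq_div_iff (mul_ne_zero hm hc), mul_div_assoc', div_mul_eq_mul_div,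
    div_eq_iff hP]
  linear_combination 1 / 2 * two_mul_add_one_mul_choose_mul_factorial m

/-- The linear functional on polynomials sending `X ^ n` to `B_(n+1) / (n+1)`. -/
noncomputable def bernoulliFunctional : Polynomial ℂ →ₗ[ℂ] ℂ :=
  Polynomial.lsum fun n => LinearMap.mulRight ℂ ((bernoulli (n + 1) : ℂ) / (n + 1))

theorem bernoulliFunctional_X_pow (n : ℕ) :
    bernoulliFunctional (Polynomial.X ^ n) = (bernoulli (n + 1) : ℂ) / (n + 1) := by
  rw [bernoulliFunctional, Polynomial.lsum_apply, Polynomial.X_pow_eq_monomial,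
    Polynomial.sum_monomial_index] <;> simp

theorem bernoulliFunctional_pow_eq_aeval (n : ℕ) :
    bernoulliFunctional ((4 * Polynomial.X + 1) ^ n) =
      (4 ^ (n + 1) * Polynomial.aeval (1 / 4 : ℂ) (Polynomial.bernoulli (n + 1)) - 1) /
        (4 * (n + 1)) := by
  have hn1 : (n + 1 : ℂ) ≠ 0 := by exact_mod_cast n.succ_ne_zero
  have hB : 4 ^ (n + 1) * Polynomial.aeval (1 / 4 : ℂ) (Polynomial.bernoulli (n + 1)) =
      1 + ∑ k ∈ range (n + 1),
        4 ^ (k + 1) * ((n + 1).choose (k + 1) : ℂ) * bernoulli (k + 1) := by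
    rw [Polynomial.bernoulli, map_sum, Finset.mul_sum, Finset.sum_range_succ', add_comm]
    congr 1
    · simp [Polynomial.aeval_monomial]
    · refine Finset.sum_congr rfl fun k hk => ?_
      have hk' : k ≤ n := by simpa [Nat.lt_succ_iff] using hk
      obtain ⟨d, rfl⟩ := Nat.exists_eq_add_of_le hk'
      rw [show k + d + 1 - (k + 1) = d by omega, Polynomial.aeval_monomial]
      simp only [one_div, inv_pow, map_mul, map_natCast, eq_ratCast]
      field_simp
      ring
  rw [hB, add_pow, map_sum, eq_div_iff (by simpa using hn1), Finset.sum_mul, add_sub_cancel_left]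
  refine Finset.sum_congr rfl fun k _ => ?_
  have hpoly : ((4 * Polynomial.X) ^ k * 1 ^ (n - k) * (n.choose k : Polynomial ℂ)) =
      ((4 : ℂ) ^ k * n.choose k) • Polynomial.X ^ k := by
    rw [Polynomial.smul_eq_C_mul]
    simp only [map_mul, map_pow, map_natCast, map_ofNat, one_pow]
    ring
  have hk1 : (k + 1 : ℂ) ≠ 0 := by exact_mod_cast k.succ_ne_zero
  have hch : ((n : ℂ) + 1) * n.choose k = (n + 1).choose (k + 1) * (k + 1) := by
    exact_mod_cast Nat.add_one_mul_choose_eq n k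
  rw [hpoly, map_smul, bernoulliFunctional_X_pow, smul_eq_mul]
  field_simp
  linear_combination 4 ^ (k + 1) * (bernoulli (k + 1) : ℂ) * hch

theorem bernoulliFunctional_pow_even (k : ℕ) :
    bernoulliFunctional ((4 * Polynomial.X + 1) ^ (2 * k)) =
      -(eulerNumber (2 * k) + 1 / (2 * k + 1)) / 4 := by
  have h1 : (2 * k + 1 : ℂ) ≠ 0 := by exact_mod_cast (2 * k).succ_ne_zero
  rw [bernoulliFunctional_pow_eq_aeval, aeval_bernoulli_quarter_even (even_two_mul k)]
  push_cast
  field_simp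
  ring

theorem bernoulliFunctional_X_pow_mul_pow (m : ℕ) :
    bernoulliFunctional (Polynomial.X ^ m * (1 + 2 * Polynomial.X) ^ m) =
      ∑ k ∈ range (m + 1),
        (m.choose k : ℂ) * ((bernoulli (m + k + 1) : ℂ) / (m + k + 1)) * 2 ^ k := by
  rw [add_comm 1, add_pow, Finset.mul_sum, map_sum]
  refine Finset.sum_congr rfl fun k _ => ?_
  have hpoly : Polynomial.X ^ m *
      ((2 * Polynomial.X) ^ k * 1 ^ (m - k) * (m.choose k : Polynomial ℂ)) =
      ((2 : ℂ) ^ k * m.choose k) • Polynomial.X ^ (m + k) := by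
    rw [Polynomial.smul_eq_C_mul]
    simp only [map_mul, map_pow, map_natCast, map_ofNat, one_pow]
    ring
  rw [hpoly, map_smul, bernoulliFunctional_X_pow, smul_eq_mul]
  push_cast
  ring

theorem X_pow_mul_one_add_two_X_pow (m : ℕ) :
    (Polynomial.X ^ m * (1 + 2 * Polynomial.X) ^ m : Polynomial ℂ) =
      ∑ k ∈ range (m + 1), ((-1 / 8 : ℂ) ^ m * ((-1) ^ k * m.choose k)) •
        (4 * Polynomial.X + 1) ^ (2 * k) := by
  have hbase : (Polynomial.X * (1 + 2 * Polynomial.X) : Polynomial ℂ) =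
      Polynomial.C (-1 / 8) * (-(4 * Polynomial.X + 1) ^ 2 + 1) := by
    have h8 : (Polynomial.C (-1 / 8 : ℂ)) * 8 = -1 := by
      rw [← map_ofNat Polynomial.C 8, ← Polynomial.C_mul]
      norm_num
    linear_combination ((Polynomial.X * (1 + 2 * Polynomial.X)) : Polynomial ℂ) * h8
  rw [← mul_pow, hbase, mul_pow, add_pow, Finset.mul_sum]
  refine Finset.sum_congr rfl fun k _ => ?_
  rw [Polynomial.smul_eq_C_mul, neg_pow, pow_mul]
  simp only [map_mul, map_pow, map_neg, map_one, map_natCast, one_pow]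
  ring

theorem stmt_5 (m : ℕ) (hm : 0 < m) :
    (-1) ^ (m + 1) *
        ∑ k ∈ Finset.range (m + 1),
          (m.choose k : ℂ) * ((bernoulli (m + k + 1) : ℂ) / (m + k + 1)) * 2 ^ k
      = 1 / (2 ^ (m + 2) * (2 * m + 1) * ((2 * m).choose m)) +
        1 / 2 ^ (3 * m + 2) *
          ∑ k ∈ Finset.range (m + 1),
            (-1) ^ k * (m.choose k : ℂ) * eulerNumber (2 * k) := by
  have hodd : (2 * m + 1 : ℂ) ≠ 0 := by exact_mod_cast (2 * m).succ_ne_zero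
  have hc : ((2 * m).choose m : ℂ) ≠ 0 := by exact_mod_cast (Nat.centralBinom_pos m).ne'
  have hsum : ∑ k ∈ range (m + 1),
      (m.choose k : ℂ) * ((bernoulli (m + k + 1) : ℂ) / (m + k + 1)) * 2 ^ k =
      -(-1 / 8) ^ m / 4 * (∑ k ∈ range (m + 1), (-1) ^ k * (m.choose k : ℂ) * eulerNumber (2 * k) +
        4 ^ m / ((2 * m + 1) * ((2 * m).choose m))) := by
    rw [← bernoulliFunctional_X_pow_mul_pow, X_pow_mul_one_add_two_X_pow,
      ← sum_neg_one_pow_choose_div_odd, ← Finset.sum_add_distrib, map_sum, Finset.mul_sum]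
    refine Finset.sum_congr rfl fun k _ => ?_
    rw [map_smul, bernoulliFunctional_pow_even, smul_eq_mul]
    ring
  have hsign : (-1 : ℂ) ^ (m + 1) * -(-1 / 8) ^ m = 1 / 2 ^ (3 * m) := by
    rw [pow_succ, mul_neg_one, neg_mul_neg, ← mul_pow, pow_mul, ← one_div_pow]
    norm_num
  have h4 : (4 : ℂ) ^ m = 2 ^ m * 2 ^ m := by rw [← mul_pow]; norm_num
  have h3 : (2 : ℂ) ^ (3 * m) = 2 ^ m * 2 ^ m * 2 ^ m := by rw [← pow_add, ← pow_add]; ring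
  rw [hsum, div_mul_eq_mul_div, mul_div_assoc', ← mul_assoc, hsign, pow_add _ (3 * m), pow_add _ m,
    h3, h4]
  field_simp
  ring
end
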